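/- arXiv:1507.01627 — 2 statements merged into one kernel-verified Lean document; each statement's English description precedes it below -/
import Mathlib

section
/- Let (X_n, p_{n+1} : X_{n+1} → X_n)_{n ≥ 0} be a tower of fibrations of pointed topological spaces, with a chosen basepoint of lim_n X_n whose images give the basepoints of each X_n. Then there is a short exact sequence of pointed sets 1 → lim¹_n π_1 X_n → π_0(lim_n X_n) → lim_n π_0 X_n → 1: the map π_0(lim_n X_n) → lim_n π_0 X_n induced by the projections is surjective, and its kernel (the preimage of the basepoint) is in natural bijection with the pointed set lim¹_n π_1 X_n. -/
open scoped unitInterval Topology Topology.Homotopy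

noncomputable section

/-- A map is a *Serre fibration* if it has the homotopy lifting property
with respect to all cubes `I^k`. -/
def IsSerreFibration {E B : Type} [TopologicalSpace E] [TopologicalSpace B]
    (p : C(E, B)) : Prop :=
  ∀ (k : ℕ) (f : C((Fin k → I), E)) (H : C(I × (Fin k → I), B)),
    (∀ q, H (0, q) = p (f q)) →
      ∃ G : C(I × (Fin k → I), E),
        (∀ q, G (0, q) = f q) ∧ ∀ z, p (G z) = H z

/-- The inverse limit of a tower of spaces. -/
def TowerLim (X : ℕ → Type) [∀ n, TopologicalSpace (X n)]
    (p : ∀ n, C(X (n + 1), X n)) : Type :=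
  { z : ∀ n, X n // ∀ n, p n (z (n + 1)) = z n }

instance {X : ℕ → Type} [∀ n, TopologicalSpace (X n)] (p : ∀ n, C(X (n + 1), X n)) :
    TopologicalSpace (TowerLim X p) :=
  instTopologicalSpaceSubtype

/-- The projection from the inverse limit of a tower to the `n`th space. -/
def TowerLim.proj {X : ℕ → Type} [∀ n, TopologicalSpace (X n)]
    {p : ∀ n, C(X (n + 1), X n)} (n : ℕ) : C(TowerLim X p, X n) :=
  ⟨fun z => z.1 n, (continuous_apply n).comp continuous_subtype_val⟩

/-- The map induced on homotopy groups (in particular on `π_k` for `N = Fin k`)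
by a continuous map `f` with `f x = y`. -/
def piMap {X Y : Type} [TopologicalSpace X] [TopologicalSpace Y] (N : Type)
    (f : C(X, Y)) {x : X} {y : Y} (hf : f x = y) :
    HomotopyGroup N X x → HomotopyGroup N Y y :=
  Quotient.map
    (fun g => (⟨f.comp g.1, fun q hq => by
        rw [ContinuousMap.comp_apply, g.2 q hq, hf]⟩ : GenLoop N Y y))
    (fun g h H => H.map fun F => F.compContinuousMap f)


/-- The map `π_k (lim_n X_n) → π_k (X n)` induced by the projection `TowerLim.proj n`,
for the basepoint `⟨x, hx⟩` of the inverse limit. -/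
def piProjMap {X : ℕ → Type} [∀ n, TopologicalSpace (X n)] {p : ∀ n, C(X (n + 1), X n)}
    (k : ℕ) {x : ∀ n, X n} (hx : ∀ n, p n (x (n + 1)) = x n) (n : ℕ) :
    HomotopyGroup (Fin k) (TowerLim X p) (⟨x, hx⟩ : TowerLim X p) →
      HomotopyGroup (Fin k) (X n) (x n) :=
  piMap (Fin k) (TowerLim.proj n) rfl

/-- The map `π_k (X (n+1)) → π_k (X n)` induced by the map `p n` of the tower. -/
def piTowerMap {X : ℕ → Type} [∀ n, TopologicalSpace (X n)] {p : ∀ n, C(X (n + 1), X n)}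
    (k : ℕ) {x : ∀ n, X n} (hx : ∀ n, p n (x (n + 1)) = x n) (n : ℕ) :
    HomotopyGroup (Fin k) (X (n + 1)) (x (n + 1)) → HomotopyGroup (Fin k) (X n) (x n) :=
  piMap (Fin k) (p n) (hx n)

/-- The distinguished basepoint of `HomotopyGroup N X x`: the class of the constant map. -/
def piConst {X : Type} [TopologicalSpace X] (N : Type) (x : X) : HomotopyGroup N X x :=
  ⟦GenLoop.const⟧

/-!
A Serre fibration lifts maps of a cube relative to the image of any retraction `r`: move every
coordinate of `r q` towards that of `q` at unit speed, lift this homotopy, and evaluate the lift at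
`q` at the time `dist (r q) q` of arrival, which is `0` exactly where `r q = q`. For the square and
three of its sides this says that a path class upstairs lying over the class of a path `ε` has a
representative lying exactly over `ε`. Choosing representatives level by level therefore rigidifies
data given only up to homotopy: families of points and path classes compatible up to homotopy come
from the limit, and a compatible family of path classes between two points of the limit comes from a
path in the limit.

For a point `z` of the limit and path classes `γ n` from `x n` to `z n`, the loops
`γ n · (p γ (n + 1))⁻¹` measure the failure of `γ` to be compatible. Every family of loops arises
in this way, and a path class `(γ' n)⁻¹ · g n · γ n` is compatible with the tower precisely when
`g` carries the first failure to the second in the `lim¹` action.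
-/

section Retract

/-- The point reached from `s` after moving towards `t` by at most `τ`. -/
def moveToward (τ s t : I) : I :=
  Set.projIcc 0 1 zero_le_one (max (s - τ : ℝ) (min t (s + τ)))

@[fun_prop]
lemma continuous_moveToward {T : Type*} [TopologicalSpace T] {τ s t : T → I}
    (hτ : Continuous τ) (hs : Continuous s) (ht : Continuous t) :
    Continuous fun a => moveToward (τ a) (s a) (t a) :=
  continuous_projIcc.comp (by fun_prop)

lemma moveToward_zero (s t : I) : moveToward 0 s t = s := by
  simp [moveToward]

lemma moveToward_of_dist_le {τ s t : I} (h : dist s t ≤ τ) : moveToward τ s t = t := by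
  rw [Subtype.dist_eq, Real.dist_eq, abs_le] at h
  rw [moveToward, min_eq_left (by linarith), max_eq_right (by linarith), Set.projIcc_val]

variable {E B : Type} [TopologicalSpace E] [TopologicalSpace B]

lemma IsSerreFibration.exists_lift_of_retraction {p : C(E, B)} (hp : IsSerreFibration p) {k : ℕ}
    (r : C(Fin k → I, Fin k → I)) (f : C(Fin k → I, E)) (H : C(Fin k → I, B))
    (h : ∀ q, p (f (r q)) = H (r q)) :
    ∃ G : C(Fin k → I, E), (∀ q, r q = q → G q = f q) ∧ ∀ q, p (G q) = H q := by
  obtain ⟨L, hL0, hL⟩ := hp k (f.comp r)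
    ⟨fun z => H fun i => moveToward z.1 (r z.2 i) (z.2 i), by fun_prop⟩
    (fun q => by simp [moveToward_zero, h])
  let arrival (q : Fin k → I) : I := Set.projIcc 0 1 zero_le_one (dist (r q) q)
  have continuous_arrival : Continuous arrival := continuous_projIcc.comp (by fun_prop)
  have dist_le_arrival (q : Fin k → I) (i : Fin k) : dist (r q i) (q i) ≤ arrival q := by
    rw [Set.coe_projIcc]
    exact le_max_of_le_right <| le_min (Real.dist_le_of_mem_Icc_01 (r q i).2 (q i).2)
      (dist_le_pi_dist (r q) q i)
  refine ⟨⟨fun q => L (arrival q, q), by fun_prop⟩, fun q hq => ?_, fun q => ?_⟩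
  · have arrival_eq : arrival q = 0 := by simp [arrival, hq]
    simp [arrival_eq, hL0, hq]
  · simp [hL, moveToward_of_dist_le (dist_le_arrival q _)]

/-- The part of the boundary of the square, in coordinates `(s, t) = (q 0, q 1)`, given by
`s = 0`, `t = 0` or `t = 1`. -/
def openBox : Set (Fin 2 → I) := {q | q 0 = 0 ∨ q 1 = 0 ∨ q 1 = 1}

/-- A retraction of the square onto `openBox`: stretch the segment at height `s` about its midpoint
onto `[-s, 1 + s]`, and fold the two parts overhanging `[0, 1]` up along the sides. -/
def openBoxRetraction : C(Fin 2 → I, Fin 2 → I) where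
  toFun q :=
    let y : ℝ := q 1 + q 0 * (2 * q 1 - 1)
    let t : I := Set.projIcc 0 1 zero_le_one y
    ![Set.projIcc 0 1 zero_le_one (dist y t), t]
  continuous_toFun := by
    have := continuous_projIcc (a := (0 : ℝ)) (b := 1) (h := zero_le_one)
    fun_prop

lemma openBoxRetraction_mem (q : Fin 2 → I) : openBoxRetraction q ∈ openBox := by
  set y : ℝ := q 1 + q 0 * (2 * q 1 - 1) with hy
  rcases le_total y 0 with h0 | h0
  · exact .inr (.inl (projIcc_eq_zero.2 h0))
  rcases le_total 1 y with h1 | h1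
  · exact .inr (.inr (projIcc_eq_one.2 h1))
  · left
    simp [openBoxRetraction, ← hy, Set.projIcc_of_mem zero_le_one ⟨h0, h1⟩]

lemma openBoxRetraction_eq_self {q : Fin 2 → I} (hq : q ∈ openBox) : openBoxRetraction q = q := by
  have hs := (q 0).2
  rcases hq with h | h | h
  · ext i; fin_cases i <;> simp [openBoxRetraction, h]
  · have ht : Set.projIcc (0 : ℝ) 1 zero_le_one (-(q 0 : ℝ)) = 0 :=
      projIcc_eq_zero.2 (by linarith [hs.1])
    ext i; fin_cases i <;> simp [openBoxRetraction, h, ht, abs_of_nonneg hs.1]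
  · have ht : Set.projIcc (0 : ℝ) 1 zero_le_one (1 + (q 0 : ℝ)) = 1 :=
      projIcc_eq_one.2 (by linarith [hs.1])
    ext i; fin_cases i <;> norm_num [openBoxRetraction, h, ht, abs_of_nonneg hs.1]

lemma IsSerreFibration.exists_path_lift {p : C(E, B)} (hp : IsSerreFibration p) (a : E) {b : B}
    (ε : Path (p a) b) : ∃ (a' : E) (δ : Path a a'), ∀ t, p (δ t) = ε t := by
  obtain ⟨L, hL0, hL⟩ := hp 0 (.const _ a) ⟨fun z => ε z.1, by fun_prop⟩ (fun q => by simp)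
  exact ⟨L (1, 0), ⟨⟨fun t => L (t, 0), by fun_prop⟩, by simp [hL0], rfl⟩, fun t => hL (t, 0)⟩

lemma IsSerreFibration.exists_homotopic_lift {p : C(E, B)} (hp : IsSerreFibration p) {a b : E}
    (δ : Path a b) {ε : Path (p a) (p b)} (h : (δ.map p.continuous).Homotopic ε) :
    ∃ δ' : Path a b, δ.Homotopic δ' ∧ ∀ t, p (δ' t) = ε t := by
  obtain ⟨H⟩ := h
  have map_eq_on_openBox (q : Fin 2 → I) (hq : q ∈ openBox) : p (δ (q 1)) = H (q 0, q 1) := by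
    rcases hq with h | h | h <;> simp [h]
  obtain ⟨G, hG, hpG⟩ := hp.exists_lift_of_retraction openBoxRetraction
    ⟨fun q => δ (q 1), by fun_prop⟩ ⟨fun q => H (q 0, q 1), by fun_prop⟩
    (fun q => map_eq_on_openBox _ (openBoxRetraction_mem q))
  have G_on_openBox (s t : I) (h : s = 0 ∨ t = 0 ∨ t = 1) : G ![s, t] = δ t :=
    hG _ (openBoxRetraction_eq_self h)
  refine ⟨⟨⟨fun t => G ![1, t], by fun_prop⟩, ?_, ?_⟩,
    ⟨⟨⟨⟨fun z => G ![z.1, z.2], by fun_prop⟩, ?_, ?_⟩, ?_⟩⟩, fun t => ?_⟩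
  · simpa using G_on_openBox 1 0 (by simp)
  · simpa using G_on_openBox 1 1 (by simp)
  · exact fun t => G_on_openBox 0 t (by simp)
  · exact fun t => rfl
  · exact fun s t ht => G_on_openBox s t (.inr ht)
  · exact (hpG _).trans (H.apply_one t)

end Retract

section PathClass

open Path.Homotopic (Quotient)
open Path.Homotopic.Quotient

variable {X Y : Type*} [TopologicalSpace X] [TopologicalSpace Y]

/-- The map induced by `f` on homotopy classes of paths. The endpoints downstairs are prescribed up
to a propositional equality, so that it applies along the maps of a tower. -/
def pathClassMap (f : C(X, Y)) {a b : X} {a' b' : Y} (ha : f a = a') (hb : f b = b')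
    (γ : Quotient a b) : Quotient a' b' :=
  (γ.map f).cast ha.symm hb.symm

variable {f : C(X, Y)} {a b c : X} {a' b' c' : Y} {ha : f a = a'} {hb : f b = b'} {hc : f c = c'}

lemma pathClassMap_trans (γ : Quotient a b) (γ' : Quotient b c) :
    pathClassMap f ha hc (γ.trans γ') =
      (pathClassMap f ha hb γ).trans (pathClassMap f hb hc γ') := by
  subst ha hb hc
  simp only [pathClassMap, cast_rfl_rfl]
  exact (FundamentalGroupoid.map f).map_comp (X := .mk a) (Y := .mk b) (Z := .mk c) γ γ'

lemma pathClassMap_symm (γ : Quotient a b) :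
    pathClassMap f hb ha γ.symm = (pathClassMap f ha hb γ).symm := by
  subst ha hb
  induction γ using Path.Homotopic.Quotient.ind with | mk γ => rfl

lemma pathClassMap_mk {δ : Path a b} {ε : Path a' b'} (h : ∀ t, f (δ t) = ε t) :
    pathClassMap f ha hb (mk δ) = mk ε := by
  subst ha hb
  exact congrArg mk (Path.ext (funext h))

lemma IsSerreFibration.exists_mk_eq_lift {E B : Type} [TopologicalSpace E] [TopologicalSpace B]
    {p : C(E, B)} (hp : IsSerreFibration p) {a b : E} {a' b' : B} {ha : p a = a'} {hb : p b = b'}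
    (γ : Quotient a b) (ε : Path a' b') (h : pathClassMap p ha hb γ = mk ε) :
    ∃ δ : Path a b, mk δ = γ ∧ ∀ t, p (δ t) = ε t := by
  subst ha hb
  obtain ⟨γ, rfl⟩ := mk_surjective γ
  obtain ⟨δ, hδ, lift⟩ := hp.exists_homotopic_lift γ (Path.Homotopic.Quotient.exact h)
  exact ⟨δ, (Path.Homotopic.Quotient.eq.2 hδ).symm, lift⟩

lemma eq_trans_symm_iff_trans_eq {h : Quotient a b} {γ : Quotient a c} {α : Quotient b c} :
    h = γ.trans α.symm ↔ h.trans α = γ := by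
  constructor <;> rintro rfl <;> simp

lemma symm_trans_eq_iff_eq_trans {h : Quotient b c} {γ : Quotient a b} {α : Quotient a c} :
    γ.symm.trans α = h ↔ α = γ.trans h := by
  constructor <;> rintro rfl <;> simp [← trans_assoc]

lemma symm_trans_trans_eq_iff {a₁ b₁ c₁ : X} {α : Quotient b c} {α' : Quotient b₁ c₁}
    {k : Quotient b₁ b} {γ : Quotient a c} {γ' : Quotient a₁ c₁} {l : Quotient a₁ a} :
    α'.symm.trans (k.trans α) = γ'.symm.trans (l.trans γ) ↔
      γ'.trans α'.symm = l.trans ((γ.trans α.symm).trans k.symm) :=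
  calc
    _ ↔ l.trans γ = γ'.trans (α'.symm.trans (k.trans α)) := by
      rw [eq_comm, symm_trans_eq_iff_eq_trans]
    _ ↔ _ := by
      rw [← trans_assoc l, ← trans_assoc l, eq_trans_symm_iff_trans_eq, eq_trans_symm_iff_trans_eq,
        trans_assoc, trans_assoc, eq_comm]

variable {x z w : X}

/-- The path class from `w` to `z` that runs back along `γ'`, around the loop `g` and out
along `γ`. -/
def detour (γ : Quotient x z) (γ' : Quotient x w) (g : HomotopyGroup (Fin 1) X x) :
    Quotient w z :=
  γ'.symm.trans ((HomotopyGroup.pi1MulEquivFundamentalGroup g).toPath.trans γ)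

lemma detour_surjective (γ : Quotient x z) (γ' : Quotient x w) :
    Function.Surjective (detour γ γ') := by
  intro D
  refine ⟨HomotopyGroup.pi1MulEquivFundamentalGroup.symm (γ'.trans (D.trans γ.symm)), ?_⟩
  rw [detour, MulEquiv.apply_symm_apply]
  refine symm_trans_eq_iff_eq_trans.2 ((trans_assoc _ _ _).trans ?_)
  rw [trans_assoc, symm_trans, trans_refl]

lemma pi1MulEquivFundamentalGroup_piMap {X Y : Type} [TopologicalSpace X] [TopologicalSpace Y]
    (f : C(X, Y)) {x : X} {y : Y} (hf : f x = y) (g : HomotopyGroup (Fin 1) X x) :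
    (HomotopyGroup.pi1MulEquivFundamentalGroup (piMap (Fin 1) f hf g)).toPath =
      pathClassMap f hf hf (HomotopyGroup.pi1MulEquivFundamentalGroup g).toPath := by
  induction g using Quotient.inductionOn with | _ g => rfl

end PathClass

section Pi0

variable {X : Type*} [TopologicalSpace X] {x z w : X}

/-- The path component of `z`, as an element of `π_0` at the basepoint `x`. -/
def pi0Class (x z : X) : HomotopyGroup (Fin 0) X x :=
  ⟦(genLoopHomeoOfIsEmpty (Fin 0) x).symm z⟧

lemma pi0Class_surjective : Function.Surjective (pi0Class x) :=
  Quotient.mk_surjective.comp (genLoopHomeoOfIsEmpty (Fin 0) x).symm.surjective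

lemma pi0Class_eq_iff : pi0Class x z = pi0Class x w ↔ Joined z w :=
  HomotopyGroup.pi0EquivZerothHomotopy.injective.eq_iff.symm.trans
    (Quotient.eq (r := pathSetoid X))

lemma piMap_pi0Class {X Y : Type} [TopologicalSpace X] [TopologicalSpace Y] (f : C(X, Y)) {x : X}
    {y : Y} (hf : f x = y) (z : X) : piMap (Fin 0) f hf (pi0Class x z) = pi0Class y (f z) :=
  rfl

end Pi0

section Tower

open Path.Homotopic (Quotient)
open Path.Homotopic.Quotient

lemma exists_dependent_seq {A : ℕ → Type*} (R : ∀ n, A n → A (n + 1) → Prop) (a₀ : A 0)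
    (step : ∀ n a, ∃ a', R n a a') : ∃ s : ∀ n, A n, ∀ n, R n (s n) (s (n + 1)) := by
  choose next hnext using step
  exact ⟨fun n => Nat.rec a₀ next n, fun n => hnext n _⟩

variable {X : ℕ → Type} [∀ n, TopologicalSpace (X n)] {p : ∀ n, C(X (n + 1), X n)}

lemma exists_towerLim_pathClass (hfib : ∀ n, IsSerreFibration (p n)) {y w : ∀ n, X n}
    (hw : ∀ n, p n (y (n + 1)) = w n) (η : ∀ n, Quotient (y n) (w n)) :
    ∃ (z : TowerLim X p) (γ : ∀ n, Quotient (y n) (z.1 n)),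
      ∀ n, (η n).trans (pathClassMap (p n) (hw n) (z.2 n) (γ (n + 1))) = γ n := by
  obtain ⟨s, hs⟩ := exists_dependent_seq (A := fun n => Σ z : X n, Quotient (y n) z)
    (fun n a a' => ∃ hz : p n a'.1 = a.1, (η n).trans (pathClassMap (p n) (hw n) hz a'.2) = a.2)
    ⟨y 0, .refl _⟩ (by
      rintro n ⟨z, γ⟩
      obtain rfl : w = fun n => p n (y (n + 1)) := funext fun n => (hw n).symm
      obtain ⟨ε, hε⟩ := mk_surjective ((η n).symm.trans γ)
      obtain ⟨z', δ, hδ⟩ := (hfib n).exists_path_lift (y (n + 1)) ε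
      have hz' : p n z' = z := by simpa using hδ 1
      refine ⟨⟨z', mk δ⟩, hz', ?_⟩
      rw [pathClassMap_mk hδ, hε, ← trans_assoc, trans_symm, refl_trans])
  choose hz hs using hs
  exact ⟨⟨fun n => (s n).1, hz⟩, fun n => (s n).2, hs⟩

lemma joined_iff_exists_pathClass (hfib : ∀ n, IsSerreFibration (p n)) {z z' : TowerLim X p} :
    Joined z z' ↔ ∃ D : ∀ n, Quotient (z.1 n) (z'.1 n),
      ∀ n, pathClassMap (p n) (z.2 n) (z'.2 n) (D (n + 1)) = D n := by
  constructor
  · rintro ⟨δ⟩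
    exact ⟨fun n => mk (δ.map (TowerLim.proj n).continuous),
      fun n => pathClassMap_mk fun t => (δ t).2 n⟩
  rintro ⟨D, hD⟩
  obtain ⟨δ₀, hδ₀⟩ := mk_surjective (D 0)
  obtain ⟨s, hs⟩ := exists_dependent_seq (A := fun n => {δ : Path (z.1 n) (z'.1 n) // mk δ = D n})
    (fun n δ δ' => ∀ t, p n (δ'.1 t) = δ.1 t) ⟨δ₀, hδ₀⟩ (by
      rintro n ⟨ε, hε⟩
      obtain ⟨δ, hδ, lift⟩ := (hfib n).exists_mk_eq_lift (D (n + 1)) ε ((hD n).trans hε.symm)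
      exact ⟨⟨δ, hδ⟩, lift⟩)
  refine ⟨⟨⟨fun t => ⟨fun n => (s n).1 t, fun n => hs n t⟩, ?_⟩, ?_, ?_⟩⟩
  · exact Continuous.subtype_mk (continuous_pi fun n => (s n).1.continuous) _
  · exact Subtype.ext (funext fun n => (s n).1.source)
  · exact Subtype.ext (funext fun n => (s n).1.target)

lemma exists_piProjMap_eq (hfib : ∀ n, IsSerreFibration (p n)) {x : ∀ n, X n}
    (hx : ∀ n, p n (x (n + 1)) = x n) (a : ∀ n, HomotopyGroup (Fin 0) (X n) (x n))
    (ha : ∀ n, piTowerMap 0 hx n (a (n + 1)) = a n) : ∃ b, ∀ n, piProjMap 0 hx n b = a n := by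
  choose y hy using fun n => pi0Class_surjective (a n)
  obtain rfl : (fun n => pi0Class (x n) (y n)) = a := funext hy
  have η (n : ℕ) : Joined (y n) (p n (y (n + 1))) :=
    (pi0Class_eq_iff.1 ((piMap_pi0Class _ (hx n) _).symm.trans (ha n))).symm
  obtain ⟨z, γ, -⟩ := exists_towerLim_pathClass hfib (fun n => rfl) fun n => mk (η n).somePath
  exact ⟨pi0Class _ z, fun n => pi0Class_eq_iff.2 (Joined.symm ⟨(γ n).out⟩)⟩

variable {x : ∀ n, X n} (hx : ∀ n, p n (x (n + 1)) = x n)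

/-- The loops `γ n · (p γ (n + 1))⁻¹`, which measure the failure of a family of path classes from
the basepoints to a point of the limit to be compatible with the maps of the tower. -/
def discrepancy {z : TowerLim X p} (γ : ∀ n, Quotient (x n) (z.1 n)) (n : ℕ) :
    HomotopyGroup (Fin 1) (X n) (x n) :=
  HomotopyGroup.pi1MulEquivFundamentalGroup.symm
    ((γ n).trans (pathClassMap (p n) (hx n) (z.2 n) (γ (n + 1))).symm)

lemma exists_discrepancy_eq (hfib : ∀ n, IsSerreFibration (p n))
    (h : ∀ n, HomotopyGroup (Fin 1) (X n) (x n)) :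
    ∃ (z : TowerLim X p) (γ : ∀ n, Quotient (x n) (z.1 n)), discrepancy hx γ = h := by
  obtain ⟨z, γ, hγ⟩ := exists_towerLim_pathClass hfib hx fun n =>
    (HomotopyGroup.pi1MulEquivFundamentalGroup (h n)).toPath
  refine ⟨z, γ, funext fun n => ?_⟩
  exact (MulEquiv.symm_apply_eq _).2 (eq_trans_symm_iff_trans_eq.2 (hγ n)).symm

lemma discrepancy_refl : discrepancy hx (z := ⟨x, hx⟩) (fun n => .refl (x n)) = 1 := by
  funext n
  refine (MulEquiv.symm_apply_eq _).2 ?_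
  rw [Pi.one_apply, map_one]
  refine (eq_trans_symm_iff_trans_eq.2 ?_).symm
  exact (refl_trans _).trans (pathClassMap_mk fun _ => hx n)

lemma pathClassMap_detour_eq_iff {z z' : TowerLim X p} (γ : ∀ n, Quotient (x n) (z.1 n))
    (γ' : ∀ n, Quotient (x n) (z'.1 n)) (g : ∀ n, HomotopyGroup (Fin 1) (X n) (x n)) (n : ℕ) :
    pathClassMap (p n) (z'.2 n) (z.2 n) (detour (γ (n + 1)) (γ' (n + 1)) (g (n + 1))) =
        detour (γ n) (γ' n) (g n) ↔
      discrepancy hx γ' n =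
        (piTowerMap 1 hx n (g (n + 1)))⁻¹ * discrepancy hx γ n * g n := by
  rw [detour, detour, pathClassMap_trans (hb := hx n), pathClassMap_trans (hb := hx n),
    pathClassMap_symm, ← pi1MulEquivFundamentalGroup_piMap,
    ← HomotopyGroup.pi1MulEquivFundamentalGroup.injective.eq_iff, map_mul, map_mul, map_inv]
  simp only [discrepancy, MulEquiv.apply_symm_apply]
  exact symm_trans_trans_eq_iff

lemma joined_iff_exists_discrepancy_eq (hfib : ∀ n, IsSerreFibration (p n)) {z z' : TowerLim X p}
    (γ : ∀ n, Quotient (x n) (z.1 n)) (γ' : ∀ n, Quotient (x n) (z'.1 n)) :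
    Joined z z' ↔ ∃ g : ∀ n, HomotopyGroup (Fin 1) (X n) (x n),
      ∀ n, discrepancy hx γ' n =
        (piTowerMap 1 hx n (g (n + 1)))⁻¹ * discrepancy hx γ n * g n := by
  have joined_comm : Joined z z' ↔ Joined z' z := ⟨Joined.symm, Joined.symm⟩
  have hsurj := Function.Surjective.piMap fun n => detour_surjective (γ n) (γ' n)
  rw [joined_comm, joined_iff_exists_pathClass hfib, hsurj.exists]
  exact exists_congr fun g => forall_congr' (pathClassMap_detour_eq_iff hx γ γ' g)

lemma joined_of_discrepancy_eq (hfib : ∀ n, IsSerreFibration (p n)) {z z' : TowerLim X p}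
    {γ : ∀ n, Quotient (x n) (z.1 n)} {γ' : ∀ n, Quotient (x n) (z'.1 n)}
    (h : discrepancy hx γ = discrepancy hx γ') : Joined z z' :=
  (joined_iff_exists_discrepancy_eq hx hfib γ γ').2
    (h ▸ (joined_iff_exists_discrepancy_eq hx hfib γ γ).1 (Joined.refl z))

end Tower

/-- **Theorem 2.1 (main theorem), case `k = 0`.**  Let `(X n, p n)` be a tower of fibrations
of pointed topological spaces, with basepoints the components `x n` of a chosen point of the
inverse limit.  Then there is a short exact sequence of pointed sets
`1 → lim¹_n π_1 X_n → π_0 (lim_n X_n) → lim_n π_0 X_n → 1`: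
the map `P : π_0 (lim_n X_n) → lim_n π_0 X_n` induced by the projections is surjective, and
its kernel (the preimage of the basepoint) is in natural bijection with the pointed set
`lim¹_n π_1 X_n` (the orbit set of the `lim¹` action on `∏_n π_1 X_n`, here encoded by a map
`Φ` defined on `∏_n π_1 X_n` that identifies two families exactly when they lie in the same
orbit, sends the identity to the basepoint, and has image exactly the kernel of `P`). -/
theorem pi0_towerLim_shortExact
    (X : ℕ → Type) [∀ n, TopologicalSpace (X n)] (p : ∀ n, C(X (n + 1), X n))
    (hfib : ∀ n, IsSerreFibration (p n))
    (x : ∀ n, X n) (hx : ∀ n, p n (x (n + 1)) = x n) :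
    -- `P` is surjective onto `lim_n π_0 X_n`:
    (∀ a : ∀ n, HomotopyGroup (Fin 0) (X n) (x n),
      (∀ n, piTowerMap 0 hx n (a (n + 1)) = a n) →
      ∃ b, ∀ n, piProjMap 0 hx n b = a n) ∧
    -- the pointed set `lim¹_n π_1 X_n` is in bijection with the kernel of `P`:
    ∃ Φ : (∀ n, HomotopyGroup (Fin 1) (X n) (x n)) →
        HomotopyGroup (Fin 0) (TowerLim X p) (⟨x, hx⟩ : TowerLim X p),
      -- `Φ` identifies exactly the orbits of the `lim¹` action, so it descends to an
      -- injection of the orbit set `lim¹_n π_1 X_n`: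
      (∀ h h', Φ h = Φ h' ↔
        ∃ g : ∀ n, HomotopyGroup (Fin 1) (X n) (x n),
          ∀ n, h' n = (piTowerMap 1 hx n (g (n + 1)))⁻¹ * h n * g n) ∧
      -- the bijection is pointed: the orbit of the identity goes to the basepoint:
      (Φ 1 = piConst (Fin 0) (⟨x, hx⟩ : TowerLim X p)) ∧
      -- the image of `Φ` is exactly the kernel of `P`:
      (∀ b, (∀ n, piProjMap 0 hx n b = piConst (Fin 0) (x n)) ↔ ∃ h, Φ h = b) := by
  refine ⟨exists_piProjMap_eq hfib hx, ?_⟩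
  choose z γ hγ using exists_discrepancy_eq hx hfib
  refine ⟨fun h => pi0Class _ (z h), fun h h' => ?_, ?_, fun b => ⟨fun hb => ?_, ?_⟩⟩
  · refine pi0Class_eq_iff.trans ?_
    rw [joined_iff_exists_discrepancy_eq hx hfib (γ h) (γ h'), hγ, hγ]
  · exact pi0Class_eq_iff.2
      (joined_of_discrepancy_eq hx hfib ((hγ 1).trans (discrepancy_refl hx).symm))
  · obtain ⟨w, rfl⟩ := pi0Class_surjective b
    have hw (n : ℕ) : Joined (x n) (w.1 n) :=
      (pi0Class_eq_iff.1 ((piMap_pi0Class _ rfl _).symm.trans (hb n))).symm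
    exact ⟨_, pi0Class_eq_iff.2
      (joined_of_discrepancy_eq hx hfib (hγ (discrepancy hx fun n => .mk (hw n).somePath)))⟩
  · rintro ⟨h, rfl⟩ n
    exact pi0Class_eq_iff.2 (Joined.symm ⟨(γ h n).out⟩)

end
end

section
/- Let (X_n, p_{n+1}) and (Y_n, q_{n+1}) be towers of fibrations of topological spaces, and let (f_n : X_n → Y_n)_{n ≥ 0} be a map of towers such that every f_n is a weak homotopy equivalence. If the inverse limit lim_n Y_n is nonempty, then the inverse limit lim_n X_n is nonempty. -/
open scoped unitInterval Topology Topology.Homotopy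

noncomputable section

/-- The map induced on path components by a continuous map. -/
def pi0Map {X Y : Type} [TopologicalSpace X] [TopologicalSpace Y] (f : C(X, Y)) :
    ZerothHomotopy X → ZerothHomotopy Y :=
  Quotient.map (fun z => f z)
    (fun a b h => Nonempty.map (fun γ : Path a b => γ.map f.continuous) h)

/-- A continuous map is a *weak homotopy equivalence* if it induces a bijection on path
components and, for every basepoint `x` and every `k ≥ 1`, an isomorphism
`π_k (X, x) → π_k (Y, f x)`. -/
def IsWeakHomotopyEquiv {X Y : Type} [TopologicalSpace X] [TopologicalSpace Y]
    (f : C(X, Y)) : Prop :=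
  Function.Bijective (pi0Map f) ∧
    ∀ (x : X) (k : ℕ), 1 ≤ k →
      Function.Bijective (piMap (Fin k) f (x := x) (y := f x) rfl)

/-- The map induced on inverse limits by a map of towers. -/
def towerMap {X Y : ℕ → Type} [∀ n, TopologicalSpace (X n)] [∀ n, TopologicalSpace (Y n)]
    (p : ∀ n, C(X (n + 1), X n)) (q : ∀ n, C(Y (n + 1), Y n))
    (f : ∀ n, C(X n, Y n)) (hf : ∀ n z, q n (f (n + 1) z) = f n (p n z)) :
    C(TowerLim X p, TowerLim Y q) :=
  ⟨fun z => ⟨fun n => f n (z.1 n), fun n => by rw [hf n, z.2 n]⟩,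
    Continuous.subtype_mk
      (continuous_pi fun n => (f n).continuous.comp
        ((continuous_apply n).comp continuous_subtype_val)) _⟩

/-! Bijectivity on path components turns a point `(y n)` of the limit of `Y` into points `x n : X n`
with `p n (x (n + 1))` merely joined to `x n`. Lifting paths along the `p n`, one stage at a time,
moves each `x n` within its path component until the compatibility is strict. -/

open Function Set

theorem exists_thread_of_surjOn {A : ℕ → Type*} (π : ∀ n, A (n + 1) → A n)
    {S : ∀ n, Set (A n)} (hS : (S 0).Nonempty)
    (hπ : ∀ n, SurjOn (π n) (S (n + 1)) (S n)) :
    ∃ a : ∀ n, A n, (∀ n, a n ∈ S n) ∧ ∀ n, π n (a (n + 1)) = a n := by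
  have exists_lift (n : ℕ) (a : S n) : ∃ b : S (n + 1), π n b = a :=
    let ⟨b, hb, hba⟩ := hπ n a.2
    ⟨⟨b, hb⟩, hba⟩
  choose lift hlift using exists_lift
  let a (n : ℕ) : S n := Nat.rec ⟨hS.some, hS.some_mem⟩ lift n
  exact ⟨fun n => (a n).1, fun n => (a n).2, fun n => hlift n (a n)⟩

theorem IsSerreFibration.surjOn_pathComponent {E B : Type} [TopologicalSpace E]
    [TopologicalSpace B] {p : C(E, B)} (hp : IsSerreFibration p) (e : E) :
    SurjOn p (pathComponent e) (pathComponent (p e)) := by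
  rintro b ⟨γ⟩
  -- A path in `B` is a homotopy of maps from the cube `I^0`, which is a point.
  obtain ⟨G, hG_zero, hpG⟩ := hp 0 (.const _ e) (γ.toContinuousMap.comp .fst)
    (fun _ => γ.source)
  have hG_one : p (G (1, default)) = b := (hpG _).trans γ.target
  exact ⟨G (1, default), ⟨⟨G.comp (.prodMk (.id I) (.const _ default)), hG_zero _, rfl⟩⟩, hG_one⟩

section PathComponents

variable {X Y : Type} [TopologicalSpace X] [TopologicalSpace Y] {f : C(X, Y)}

theorem joined_of_joined_map_of_injective_pi0Map (hf : Injective (pi0Map f)) {a b : X}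
    (h : Joined (f a) (f b)) : Joined a b :=
  Quotient.exact (hf (a₁ := ⟦a⟧) (a₂ := ⟦b⟧) (Quotient.sound h))

theorem exists_joined_map_of_surjective_pi0Map (hf : Surjective (pi0Map f)) (y : Y) :
    ∃ x, Joined (f x) y :=
  let ⟨x, hx⟩ := (hf.comp Quotient.mk_surjective) ⟦y⟧
  ⟨x, Quotient.exact hx⟩

end PathComponents

theorem TowerLim.exists_forall_joined {X : ℕ → Type} [∀ n, TopologicalSpace (X n)]
    {p : ∀ n, C(X (n + 1), X n)}
    (hp : ∀ n x, SurjOn (p n) (pathComponent x) (pathComponent (p n x)))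
    (x : ∀ n, X n) (hx : ∀ n, Joined (p n (x (n + 1))) (x n)) :
    ∃ z : TowerLim X p, ∀ n, Joined (x n) (z.1 n) := by
  have surjOn_component (n : ℕ) :
      SurjOn (p n) (pathComponent (x (n + 1))) (pathComponent (x n)) :=
    pathComponent_congr (hx n) ▸ hp n (x (n + 1))
  obtain ⟨z, hxz, hz⟩ := exists_thread_of_surjOn (fun n => p n)
    ⟨x 0, mem_pathComponent_self _⟩ surjOn_component
  exact ⟨⟨z, hz⟩, hxz⟩

theorem towerLim_nonempty_of_towerLim_nonempty_general
    {X Y : ℕ → Type} [∀ n, TopologicalSpace (X n)] [∀ n, TopologicalSpace (Y n)]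
    {p : ∀ n, C(X (n + 1), X n)} {q : ∀ n, C(Y (n + 1), Y n)}
    (hp : ∀ n x, SurjOn (p n) (pathComponent x) (pathComponent (p n x)))
    {f : ∀ n, C(X n, Y n)} (hf : ∀ n x, Joined (q n (f (n + 1) x)) (f n (p n x)))
    (hf_bij : ∀ n, Bijective (pi0Map (f n)))
    {y : ∀ n, Y n} (hy : ∀ n, Joined (q n (y (n + 1))) (y n)) :
    ∃ z : TowerLim X p, ∀ n, Joined (f n (z.1 n)) (y n) := by
  choose x hxy using fun n => exists_joined_map_of_surjective_pi0Map (hf_bij n).2 (y n)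
  have hx (n : ℕ) : Joined (p n (x (n + 1))) (x n) := by
    have map_hxy : Joined (q n (f (n + 1) (x (n + 1)))) (q n (y (n + 1))) :=
      (hxy (n + 1)).map (q n).continuous
    exact joined_of_joined_map_of_injective_pi0Map (hf_bij n).1 <|
      (hf n _).symm.trans <| map_hxy.trans <| (hy n).trans (hxy n).symm
  obtain ⟨z, hxz⟩ := TowerLim.exists_forall_joined hp x hx
  exact ⟨z, fun n => ((hxz n).symm.map (f n).continuous).trans (hxy n)⟩

/-- If `(f n : X n → Y n)` is a map of towers of fibrations of topological spaces such that
every `f n` is a weak homotopy equivalence, and the inverse limit of the tower `Y` is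
nonempty, then the inverse limit of the tower `X` is nonempty. -/
theorem towerLim_nonempty_of_towerLim_nonempty
    (X Y : ℕ → Type) [∀ n, TopologicalSpace (X n)] [∀ n, TopologicalSpace (Y n)]
    (p : ∀ n, C(X (n + 1), X n)) (q : ∀ n, C(Y (n + 1), Y n))
    (hp : ∀ n, IsSerreFibration (p n)) (hq : ∀ n, IsSerreFibration (q n))
    (f : ∀ n, C(X n, Y n)) (hf : ∀ n z, q n (f (n + 1) z) = f n (p n z))
    (hwe : ∀ n, IsWeakHomotopyEquiv (f n))
    (hY : Nonempty (TowerLim Y q)) :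
    Nonempty (TowerLim X p) := by
  obtain ⟨y, hy⟩ := hY
  exact (towerLim_nonempty_of_towerLim_nonempty_general (fun n => (hp n).surjOn_pathComponent)
    (fun n x => by rw [hf]) (fun n => (hwe n).1) (fun n => by rw [hy n])).nonempty

end
end
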